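/- For all integers d, k with 1 ≤ k ≤ d and all n ≥ 1, the number of closed (d,k)-self-avoiding manifolds of k-area n satisfies c^SAM_{(d,k),n}(0) ≤ C(d,k) · (2(d−k)+1)^{n−1}, where C(d,k) is the binomial coefficient d choose k. -/

import Mathlib

open Filter

/-- A `k`-face of the hypercubic lattice `ℤ^d`: an orientation set `S ⊆ {1,…,d}`
together with a base vertex `v ∈ ℤ^d`. -/
abbrev Face (d : ℕ) := Finset (Fin d) × (Fin d → ℤ)

/-- The boundary `(k-1)`-edges of a `k`-face `(S, v)`: the `(k-1)`-faces
`(S \ {i}, v)` and `(S \ {i}, v + e_i)` for `i ∈ S`. -/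
def faceEdges {d : ℕ} (f : Face d) : Finset (Face d) :=
  f.1.biUnion fun i =>
    {(f.1.erase i, f.2), (f.1.erase i, f.2 + Pi.single i 1)}

/-- Two faces are adjacent if they are distinct and share a common boundary edge. -/
def FaceAdj {d : ℕ} (f g : Face d) : Prop :=
  f ≠ g ∧ ∃ e, e ∈ faceEdges f ∧ e ∈ faceEdges g

/-- A set of faces is connected with respect to adjacency. -/
def ConnectedFaces {d : ℕ} (M : Finset (Face d)) : Prop :=
  ∀ f ∈ M, ∀ g ∈ M, Relation.ReflTransGen (fun a b => a ∈ M ∧ b ∈ M ∧ FaceAdj a b) f g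

/-- A `(d,k)`-self-avoiding manifold of `k`-area `n`: a connected set of `n` `k`-faces
such that every `(k-1)`-edge bounds at most two of its `k`-faces. -/
def IsSAM (d k n : ℕ) (M : Finset (Face d)) : Prop :=
  M.card = n ∧ (∀ f ∈ M, f.1.card = k) ∧ ConnectedFaces M ∧
    ∀ e : Face d, (M.filter fun f => e ∈ faceEdges f).card ≤ 2

/-- A closed `(d,k)`-self-avoiding manifold: every boundary edge of every face
is shared by exactly two faces. -/
def IsClosedSAM (d k n : ℕ) (M : Finset (Face d)) : Prop :=
  IsSAM d k n M ∧ ∀ f ∈ M, ∀ e ∈ faceEdges f,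
    (M.filter fun g => e ∈ faceEdges g).card = 2

/-- A `(d,k)`-fixed polyominoid of `k`-area `n`: a connected set of `n` `k`-faces. -/
def IsXD (d k n : ℕ) (M : Finset (Face d)) : Prop :=
  M.card = n ∧ (∀ f ∈ M, f.1.card = k) ∧ ConnectedFaces M

/-- Translation of a face by a lattice vector. -/
def translateFace {d : ℕ} (t : Fin d → ℤ) (f : Face d) : Face d := (f.1, f.2 + t)

/-- Two sets of faces are translation-equivalent. -/
def TransEquiv {d : ℕ} (A B : Finset (Face d)) : Prop :=
  ∃ t : Fin d → ℤ, A.image (translateFace t) = B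

/-- The number of `(d,k)`-self-avoiding manifolds of `k`-area `n`, up to translation. -/
noncomputable def samCount (d k n : ℕ) : ℕ :=
  Nat.card (Quot fun A B : {M : Finset (Face d) // IsSAM d k n M} =>
    TransEquiv A.val B.val)

/-- The number of closed `(d,k)`-self-avoiding manifolds of `k`-area `n`, up to
translation. -/
noncomputable def closedSamCount (d k n : ℕ) : ℕ :=
  Nat.card (Quot fun A B : {M : Finset (Face d) // IsClosedSAM d k n M} =>
    TransEquiv A.val B.val)

/-- The number of `(d,k)`-fixed polyominoids of `k`-area `n`, up to translation. -/
noncomputable def xdCount (d k n : ℕ) : ℕ :=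
  Nat.card (Quot fun A B : {M : Finset (Face d) // IsXD d k n M} =>
    TransEquiv A.val B.val)

theorem cs_faces_at {d k : ℕ} (hkd : k ≤ d) (f e : Face d) (hf : f.1.card = k)
    (he : e ∈ faceEdges f) :
    ∃ G : Finset (Face d), G.card ≤ 2 * (d - k) + 1 ∧
      ∀ g : Face d, g ≠ f → e ∈ faceEdges g → g ∈ G := by
  classical
  let G : Finset (Face d) := (Finset.univ \ e.1).biUnion fun i =>
    {(insert i e.1, e.2), (insert i e.1, e.2 - Pi.single i 1)}
  have hG : ∀ g : Face d, e ∈ faceEdges g → g ∈ G := by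
    intro g hg
    simp only [faceEdges, Finset.mem_biUnion, Finset.mem_insert, Finset.mem_singleton] at hg
    obtain ⟨i, hi, hg⟩ := hg
    simp only [G, Finset.mem_biUnion, Finset.mem_insert, Finset.mem_singleton]
    refine ⟨i, ?_, ?_⟩
    · rcases hg with rfl | rfl <;> simp
    · rcases hg with rfl | rfl
      · left; simp [Finset.insert_erase hi]
      · right; simp [Finset.insert_erase hi]
  have hec : e.1.card + 1 = k := by
    simp only [faceEdges, Finset.mem_biUnion, Finset.mem_insert, Finset.mem_singleton] at he
    obtain ⟨i, hi, he⟩ := he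
    rw [← hf, ← Finset.card_erase_add_one hi]
    rcases he with rfl | rfl <;> rfl
  have hc : G.card ≤ (Finset.univ \ e.1).card * 2 :=
    Finset.card_biUnion_le_card_mul _ _ _ fun i _ => Finset.card_le_two
  have hs : (Finset.univ \ e.1).card = d - e.1.card := by
    rw [Finset.card_sdiff_of_subset (Finset.subset_univ _)]; simp
  refine ⟨G.erase f, ?_, fun g h1 h2 => Finset.mem_erase.2 ⟨h1, hG g h2⟩⟩
  rw [Finset.card_erase_of_mem (hG f he)]
  omega

theorem cs_boundary {d k n : ℕ} {M X : Finset (Face d)} (hM : IsClosedSAM d k n M)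
    (hXM : X ⊆ M) (hX : X.Nonempty) (hne : X ≠ M) :
    ∃ f ∈ X, ∃ e ∈ faceEdges f, ∀ f' ∈ X, e ∈ faceEdges f' → f' = f := by
  classical
  obtain ⟨f, hf⟩ := hX
  obtain ⟨g, hg, hgX⟩ : ∃ g ∈ M, g ∉ X := by
    by_contra! h
    exact hne (Finset.Subset.antisymm hXM h)
  have key : ∃ a b, a ∈ X ∧ b ∉ X ∧ b ∈ M ∧ FaceAdj a b := by
    by_contra! h
    have hp := hM.1.2.2.1 f (hXM hf) g hg
    have : g ∈ X := by
      clear hgX hg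
      induction hp with
      | refl => exact hf
      | tail _ h2 ih =>
        by_contra hc
        exact h _ _ ih hc h2.2.1 h2.2.2
    exact hgX this
  obtain ⟨a, b, ha, hb, hbM, hab, e, hea, heb⟩ := key
  refine ⟨a, ha, e, hea, ?_⟩
  intro f' hf' hef'
  by_contra hfa
  have h2 := hM.2 a (hXM ha) e hea
  have h3 : ({f', a, b} : Finset (Face d)) ⊆ M.filter fun g => e ∈ faceEdges g := by
    intro x hx
    simp only [Finset.mem_insert, Finset.mem_singleton] at hx
    rw [Finset.mem_filter]
    rcases hx with rfl | rfl | rfl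
    · exact ⟨hXM hf', hef'⟩
    · exact ⟨hXM ha, hea⟩
    · exact ⟨hbM, heb⟩
  have h4 := Finset.card_le_card h3
  have h5 : f' ≠ b := by rintro rfl; exact hb hf'
  rw [Finset.card_eq_three.2 ⟨f', a, b, hfa, h5, hab, rfl⟩] at h4
  have h6 : (M.filter fun g => e ∈ faceEdges g).card = 2 := by convert h2
  omega

theorem cs_cover {d k n : ℕ} (hkd : k ≤ d) (m : ℕ) : ∀ X : Finset (Face d), X.Nonempty →
    X.card + m = n → ∃ F : Finset (Finset (Face d)), F.card ≤ (2 * (d - k) + 1) ^ m ∧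
      ∀ M, IsClosedSAM d k n M → X ⊆ M → M ∈ F := by
  classical
  induction m with
  | zero =>
    intro X _ hc
    refine ⟨{X}, by simp, fun M hM hXM => ?_⟩
    rw [Finset.mem_singleton]
    exact (Finset.eq_of_subset_of_card_le hXM (by rw [hM.1.1]; omega)).symm
  | succ m ih =>
    intro X hX hc
    by_cases hex : ∃ M, IsClosedSAM d k n M ∧ X ⊆ M
    swap
    · exact ⟨∅, by simp, fun M h1 h2 => (hex ⟨M, h1, h2⟩).elim⟩
    obtain ⟨M, hM, hXM⟩ := hex
    have hne : X ≠ M := by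
      rintro rfl
      have := hM.1.1
      omega
    obtain ⟨f, hf, e, he, huniq⟩ := cs_boundary hM hXM hX hne
    obtain ⟨G, hGc, hG⟩ := cs_faces_at hkd f e (hM.1.2.1 f (hXM hf)) he
    have hF : ∀ g : Face d, ∃ F : Finset (Finset (Face d)), F.card ≤ (2 * (d - k) + 1) ^ m ∧
        (g ∉ X → ∀ M, IsClosedSAM d k n M → insert g X ⊆ M → M ∈ F) := by
      intro g
      by_cases hg : g ∈ X
      · exact ⟨∅, by simp, fun h => (h hg).elim⟩
      · obtain ⟨F, h1, h2⟩ := ih (insert g X) (Finset.insert_nonempty _ _)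
          (by rw [Finset.card_insert_of_notMem hg]; omega)
        exact ⟨F, h1, fun _ => h2⟩
    choose F hFc hFm using hF
    refine ⟨G.biUnion F, ?_, ?_⟩
    · calc (G.biUnion F).card ≤ G.card * (2 * (d - k) + 1) ^ m :=
            Finset.card_biUnion_le_card_mul _ _ _ fun g _ => hFc g
        _ ≤ (2 * (d - k) + 1) * (2 * (d - k) + 1) ^ m := Nat.mul_le_mul_right _ hGc
        _ = _ := by rw [pow_succ, mul_comm]
    · intro N hN hXN
      have h2 := hN.2 f (hXN hf) e he
      have h3 : 1 < (N.filter fun g => e ∈ faceEdges g).card := by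
        have h6 : (N.filter fun g => e ∈ faceEdges g).card = 2 := by convert h2
        omega
      obtain ⟨g, hg, hgf⟩ := Finset.exists_mem_ne h3 f
      rw [Finset.mem_filter] at hg
      rw [Finset.mem_biUnion]
      refine ⟨g, hG g hgf hg.2, hFm g (fun hgX => hgf (huniq g hgX hg.2)) N hN ?_⟩
      exact Finset.insert_subset hg.1 hXN

theorem cs_inj {d : ℕ} (t : Fin d → ℤ) : Function.Injective (translateFace t) := by
  rintro ⟨a, b⟩ ⟨a', b'⟩ h
  simpa [translateFace] using h

theorem cs_edges {d : ℕ} (t : Fin d → ℤ) (f e : Face d) :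
    translateFace t e ∈ faceEdges (translateFace t f) ↔ e ∈ faceEdges f := by
  obtain ⟨S, v⟩ := f
  obtain ⟨T, w⟩ := e
  have h : ∀ i, v + t + Pi.single i 1 = (v + Pi.single i 1) + t := fun i => by abel
  simp [translateFace, faceEdges, h]

theorem cs_edges_surj {d : ℕ} (t : Fin d → ℤ) (e : Face d) : ∃ e', translateFace t e' = e :=
  ⟨(e.1, e.2 - t), by simp [translateFace]⟩

theorem cs_filter {d : ℕ} (t : Fin d → ℤ) (M : Finset (Face d)) (e : Face d) :
    ((M.image (translateFace t)).filter fun g => translateFace t e ∈ faceEdges g).card =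
      (M.filter fun g => e ∈ faceEdges g).card := by
  rw [Finset.filter_image, Finset.card_image_of_injective _ (cs_inj t)]
  simp only [cs_edges]

theorem cs_translate {d k n : ℕ} (t : Fin d → ℤ) {M : Finset (Face d)}
    (hM : IsClosedSAM d k n M) : IsClosedSAM d k n (M.image (translateFace t)) := by
  obtain ⟨⟨h1, h2, h3, h4⟩, h5⟩ := hM
  refine ⟨⟨?_, ?_, ?_, ?_⟩, ?_⟩
  · rw [Finset.card_image_of_injective _ (cs_inj t), h1]
  · intro f hf
    obtain ⟨f, hfM, rfl⟩ := Finset.mem_image.1 hf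
    exact h2 f hfM
  · intro f hf g hg
    obtain ⟨f, hfM, rfl⟩ := Finset.mem_image.1 hf
    obtain ⟨g, hgM, rfl⟩ := Finset.mem_image.1 hg
    refine Relation.ReflTransGen.lift (translateFace t) ?_ _ _ (h3 f hfM g hgM)
    rintro a b ⟨ha, hb, hab, e, hea, heb⟩
    exact ⟨Finset.mem_image_of_mem _ ha, Finset.mem_image_of_mem _ hb, (cs_inj t).ne hab,
      translateFace t e, (cs_edges t a e).2 hea, (cs_edges t b e).2 heb⟩
  · intro e
    obtain ⟨e, rfl⟩ := cs_edges_surj t e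
    rw [cs_filter]
    exact h4 e
  · intro f hf e he
    obtain ⟨f, hfM, rfl⟩ := Finset.mem_image.1 hf
    obtain ⟨e, rfl⟩ := cs_edges_surj t e
    rw [cs_filter]
    exact h5 f hfM e ((cs_edges t f e).1 he)

theorem closedSamCount_upper_bound (d k : ℕ) (hk : 1 ≤ k) (hkd : k ≤ d)
    (n : ℕ) (hn : 1 ≤ n) :
    closedSamCount d k n ≤ d.choose k * (2 * (d - k) + 1) ^ (n - 1) := by
  classical
  have hF : ∀ S : Finset (Fin d), ∃ F : Finset (Finset (Face d)),
      F.card ≤ (2 * (d - k) + 1) ^ (n - 1) ∧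
      ∀ M, IsClosedSAM d k n M → {((S, 0) : Face d)} ⊆ M → M ∈ F := fun S =>
    cs_cover hkd (n - 1) {(S, 0)} (Finset.singleton_nonempty _) (by simp; omega)
  choose F hFc hFm using hF
  let H := (Finset.powersetCard k (Finset.univ : Finset (Fin d))).biUnion F
  have hH : H.card ≤ d.choose k * (2 * (d - k) + 1) ^ (n - 1) := by
    have := Finset.card_biUnion_le_card_mul
      (Finset.powersetCard k (Finset.univ : Finset (Fin d))) F _ fun g _ => hFc g
    simpa [H] using this
  let T := {M : {M : Finset (Face d) // IsClosedSAM d k n M} // M.1 ∈ H}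
  let ι : T → H := fun M => ⟨M.1.1, M.2⟩
  have hι : Function.Injective ι := by
    intro a b h
    exact Subtype.ext (Subtype.ext (congrArg (fun x : H => x.1) h))
  have hfin : Finite T := Finite.of_injective ι hι
  have hT : Nat.card T ≤ H.card := by
    have := Nat.card_le_card_of_injective ι hι
    simpa using this
  refine le_trans ?_ (hT.trans hH)
  unfold closedSamCount
  refine Nat.card_le_card_of_surjective (fun M : T => Quot.mk _ M.1) ?_
  intro q
  obtain ⟨⟨M, hM⟩, rfl⟩ := Quot.exists_rep q
  have hMn : M.Nonempty := by
    rw [← Finset.card_pos, hM.1.1]; omega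
  obtain ⟨f, hf⟩ := hMn
  have hM' := cs_translate (-f.2) hM
  refine ⟨⟨⟨_, hM'⟩, ?_⟩, (Quot.sound ⟨-f.2, rfl⟩).symm⟩
  refine Finset.mem_biUnion.2 ⟨f.1, ?_, hFm f.1 _ hM' ?_⟩
  · rw [Finset.mem_powersetCard]
    exact ⟨Finset.subset_univ _, hM.1.2.1 f hf⟩
  · rw [Finset.singleton_subset_iff]
    exact Finset.mem_image.2 ⟨f, hf, by simp [translateFace]⟩
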